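/- Let Λ be a normal subgroup of the free group F₂. Then girth([Λ,Λ]) ≥ 3·girth(Λ), where girth(Λ) = min{ℓ(w) : w ∈ Λ, w ≠ e}. -/

import Mathlib

/-- The girth of a subgroup of `F₂`: the minimal word length of a nontrivial element,
`⊤` for the trivial subgroup. -/
noncomputable def subgroupGirth (Λ : Subgroup (FreeGroup (Fin 2))) : ℕ∞ :=
  ⨅ w : {w : FreeGroup (Fin 2) // w ∈ Λ ∧ w ≠ 1}, ((w : FreeGroup (Fin 2)).norm : ℕ∞)

/-!
Read `w ∈ ⁅Λ, Λ⁆` as a closed walk in the Cayley graph of `F ⧸ Λ`. Its net flow through every edge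
vanishes, so each edge it traverses is also traversed backwards. As `w` is reduced, two such pairs
must interleave: `w = X a P b Q a⁻¹ R b⁻¹ S`, where `y = Q a⁻¹ R` and `z = Q P b` lie in `Λ`, and
`w` differs from `X R Q P S` by a conjugate of `⁅y⁻¹, z⁆`.

If `X R Q P S ≠ 1`, it is a shorter nontrivial element of `⁅Λ, Λ⁆` and we induct on the length.
Otherwise `w` is conjugate to `⁅y⁻¹, z⁆ ≠ 1`, so `y`, `z`, `y⁻¹ z` and `z y` are nontrivial elements
of `Λ`. The first two, up to conjugacy, give `2 g - 2 ≤ |R Q| + |Q P|`, which by the four-point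
condition in the Cayley tree of `F` is at most `|R| + |P|` or `|Q| + |R Q P|`; the last two say that
both of these sums are at least `g - 2`. Hence `|P| + |Q| + |R| + |R Q P| + 4 ≥ 3 g`.
-/

namespace GirthCommutator

open FreeGroup hiding map_mul map_inv map_one
open scoped commutatorElement

variable {α : Type*}

section FourPoint

/-- The length of the longest common prefix of two lists; for reduced words this is the Gromov
product, based at the identity, of the corresponding vertices of the Cayley tree. -/
def commonPrefixLength [DecidableEq α] : List α → List α → ℕ
  | a :: A, b :: B => if a = b then commonPrefixLength A B + 1 else 0
  | _, _ => 0

theorem min_commonPrefixLength_le [DecidableEq α] : ∀ A B C : List α,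
    min (commonPrefixLength A C) (commonPrefixLength B C) ≤ commonPrefixLength A B
  | [], _, _ | _ :: _, [], [] | _ :: _, [], _ :: _ | _ :: _, _ :: _, [] => by
    simp [commonPrefixLength]
  | a :: A, b :: B, c :: C => by
    have ih := min_commonPrefixLength_le A B C
    simp only [commonPrefixLength]
    grind

theorem mk_cons (s : α × Bool) (L : List (α × Bool)) : mk (s :: L) = mk [s] * mk L := by
  rw [mul_mk, List.singleton_append]

theorem isReduced_invRev {L : List (α × Bool)} (hL : IsReduced L) : IsReduced (invRev L) := by
  classical
  rw [isReduced_iff_reduce_eq, reduce_invRev, hL.reduce_eq]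

theorem isReduced_invRev_append {s t : α × Bool} {A B : List (α × Bool)} (hst : s ≠ t)
    (hA : IsReduced (s :: A)) (hB : IsReduced (t :: B)) :
    IsReduced (invRev (s :: A) ++ t :: B) := by
  have hA' := isReduced_invRev hA
  rw [invRev_cons] at hA' ⊢
  refine hA'.append_overlap ?_ (by simp [invRev])
  refine isReduced_cons_cons.2 ⟨fun hfst => ?_, hB⟩
  exact Bool.not_eq.2 fun hsnd => hst (Prod.ext hfst hsnd)

variable [DecidableEq α]

theorem norm_mk_of_isReduced {L : List (α × Bool)} (hL : IsReduced L) :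
    (mk L).norm = L.length := by
  rw [FreeGroup.norm, toWord_mk, hL.reduce_eq]

theorem norm_inv_mul_mk_add_commonPrefixLength : ∀ {A B : List (α × Bool)},
    IsReduced A → IsReduced B →
      ((mk A)⁻¹ * mk B).norm + 2 * commonPrefixLength A B = A.length + B.length
  | [], B, _, hB => by
    simp [commonPrefixLength, ← one_eq_mk, norm_mk_of_isReduced hB]
  | s :: A, [], hA, _ => by
    simp [commonPrefixLength, ← one_eq_mk, -inv_mk, norm_mk_of_isReduced hA]
  | s :: A, t :: B, hA, hB => by
    by_cases hst : s = t
    · subst hst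
      have ih := norm_inv_mul_mk_add_commonPrefixLength
        (hA.infix (List.suffix_cons s A).isInfix) (hB.infix (List.suffix_cons s B).isInfix)
      have cancel : (mk (s :: A))⁻¹ * mk (s :: B) = (mk A)⁻¹ * mk B := by
        rw [mk_cons s A, mk_cons s B]; group
      simp only [cancel, commonPrefixLength, if_true, List.length_cons]
      lia
    · rw [inv_mk, mul_mk, norm_mk_of_isReduced (isReduced_invRev_append hst hA hB)]
      simp [commonPrefixLength, hst]

theorem norm_inv_mul_add_commonPrefixLength (x y : FreeGroup α) :
    (x⁻¹ * y).norm + 2 * commonPrefixLength x.toWord y.toWord = x.norm + y.norm := by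
  simpa only [mk_toWord, FreeGroup.norm] using
    norm_inv_mul_mk_add_commonPrefixLength (isReduced_toWord (x := x)) (isReduced_toWord (x := y))

/-- The four-point condition for the vertices `1`, `x⁻¹`, `y` and `y * z` of the Cayley tree. -/
theorem norm_mul_add_norm_mul_le_max (x y z : FreeGroup α) :
    (x * y).norm + (y * z).norm ≤ max (x.norm + z.norm) (y.norm + (x * y * z).norm) := by
  have hxy := norm_inv_mul_add_commonPrefixLength x⁻¹ y
  have hz := norm_inv_mul_add_commonPrefixLength y (y * z)
  have hxyz := norm_inv_mul_add_commonPrefixLength x⁻¹ (y * z)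
  have ultrametric := min_commonPrefixLength_le x⁻¹.toWord y.toWord (y * z).toWord
  rw [inv_mul_cancel_left] at hz
  simp only [inv_inv, norm_inv_eq, ← mul_assoc] at hxy hxyz
  lia

end FourPoint

section Interleaving

-- The reverse of the first letter of `M` is either outside `M`, which gives an interleaving, or
-- closer to that letter than `(e, !b)` is to `(e, b)`.
theorem exists_interleaved_of_separated {L : List (α × Bool)} (hred : IsReduced L)
    (hflip : ∀ e b, (e, b) ∈ L → (e, !b) ∈ L) (M : List (α × Bool)) :
    ∀ {A C : List (α × Bool)} {e : α} {b : Bool}, L = A ++ (e, b) :: (M ++ (e, !b) :: C) →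
    ∃ A B C D E e f b c, L =
      A ++ (e, b) :: (B ++ (f, c) :: (C ++ (e, !b) :: (D ++ (f, !c) :: E))) := by
  induction hM : M.length using Nat.strong_induction_on generalizing M with
  | _ m ih =>
  subst hM
  intro A C e b hL
  have adjacent {s t : α × Bool} {A' C' : List (α × Bool)} (h : L = A' ++ s :: t :: C') :
      s.1 = t.1 → s.2 = t.2 :=
    List.isChain_iff_forall_rel_of_append_cons_cons.1 hred h
  match M with
  | [] => exact absurd (adjacent hL rfl) (by simp)
  | (f, c) :: M =>
    have hmem : (f, !c) ∈ L := hflip f c (by simp [hL])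
    rw [hL] at hmem
    simp only [List.mem_append, List.mem_cons, List.cons_append, Prod.mk.injEq] at hmem
    rcases hmem with hA | ⟨rfl, rfl⟩ | ⟨-, hc⟩ | hM | ⟨rfl, hc⟩ | hC
    · obtain ⟨A₁, A₂, rfl⟩ := List.append_of_mem hA
      exact ⟨A₁, A₂, [], M, C, f, e, !c, b, by simp [hL]⟩
    · exact absurd (adjacent hL rfl) (by simp)
    · exact absurd hc (by simp)
    · obtain ⟨M₁, M₂, rfl⟩ := List.append_of_mem hM
      exact ih M₁.length (by simp) M₁ rfl (A := A ++ [(e, b)]) (by simpa using hL)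
    · obtain rfl : c = b := by simpa using hc
      exact ih M.length (by simp) M rfl (A := A ++ [(f, c)]) (by simpa using hL)
    · obtain ⟨C₁, C₂, rfl⟩ := List.append_of_mem hC
      exact ⟨A, [], M, C₁, C₂, e, f, b, c, by simp [hL]⟩

theorem exists_interleaved {L : List (α × Bool)} (hred : IsReduced L) (hne : L ≠ [])
    (hflip : ∀ e b, (e, b) ∈ L → (e, !b) ∈ L) :
    ∃ A B C D E e f b c, L =
      A ++ (e, b) :: (B ++ (f, c) :: (C ++ (e, !b) :: (D ++ (f, !c) :: E))) := by
  obtain ⟨⟨e, b⟩, L', rfl⟩ := List.exists_cons_of_ne_nil hne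
  have hmem : (e, !b) ∈ L' := by simpa using hflip e b (by simp)
  obtain ⟨M, C, rfl⟩ := List.append_of_mem hmem
  exact exists_interleaved_of_separated hred hflip M (A := []) rfl

end Interleaving

section CayleyGraph

variable {G : Type*} [Group G] (q : FreeGroup α →* G)

/-- The edge of the Cayley graph of `G` traversed by the letter `s` from the vertex `g`. The edge
from `g` to `g * q (of x)` is encoded as `(g, x)`, and the Boolean is the direction of travel. -/
def signedEdge (g : G) (s : α × Bool) : (G × α) × Bool :=
  ((if s.2 then g else g * q (mk [s]), s.1), s.2)

/-- The edges of the Cayley graph of `G` traversed by a word starting at the vertex `g`. -/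
def edgePath : G → List (α × Bool) → List ((G × α) × Bool)
  | _, [] => []
  | g, s :: L => signedEdge q g s :: edgePath (g * q (mk [s])) L

theorem map_edgePath (g : G) (L : List (α × Bool)) :
    (edgePath q g L).map (fun e => (e.1.2, e.2)) = L := by
  induction L generalizing g with
  | nil => rfl
  | cons s L ih => simp [edgePath, signedEdge, ih]

theorem isReduced_edgePath (g : G) {L : List (α × Bool)} (hL : IsReduced L) :
    IsReduced (edgePath q g L) := by
  rw [← map_edgePath q g L, FreeGroup.IsReduced, List.isChain_map] at hL
  exact hL.imp fun _ _ h heq => h (congrArg Prod.snd heq)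

variable {q}

theorem exists_eq_append_cons_of_edgePath_eq {g : G} {L : List (α × Bool)}
    {A B : List ((G × α) × Bool)} {e : (G × α) × Bool} (h : edgePath q g L = A ++ e :: B) :
    ∃ L₁ s L₂, L = L₁ ++ s :: L₂ ∧ signedEdge q (g * q (mk L₁)) s = e ∧
      edgePath q (g * q (mk L₁) * q (mk [s])) L₂ = B := by
  induction A generalizing g L with
  | nil =>
    cases L with
    | nil => simp [edgePath] at h
    | cons s L =>
      obtain ⟨he, hB⟩ := List.cons.inj h
      exact ⟨[], s, L, rfl, by simpa [← one_eq_mk] using he, by simpa [← one_eq_mk] using hB⟩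
  | cons e' A ih =>
    cases L with
    | nil => simp [edgePath] at h
    | cons t L =>
      obtain ⟨-, h⟩ := List.cons.inj h
      obtain ⟨L₁, s, L₂, rfl, he, hB⟩ := ih h
      rw [mul_assoc g, ← map_mul, ← mk_cons] at he hB
      exact ⟨t :: L₁, s, L₂, rfl, he, hB⟩

theorem eq_inv_and_eq_mul_of_signedEdge_eq {g h : G} {s t : α × Bool} {e : G × α} {b : Bool}
    (hs : signedEdge q g s = (e, b)) (ht : signedEdge q h t = (e, !b)) :
    mk [t] = (mk [s])⁻¹ ∧ h = g * q (mk [s]) := by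
  obtain ⟨x, c⟩ := s
  obtain ⟨y, d⟩ := t
  obtain ⟨rfl, rfl⟩ := Prod.mk.inj hs
  simp only [signedEdge, Prod.mk.injEq] at ht
  obtain ⟨⟨hvertex, rfl⟩, rfl⟩ := ht
  have hinv : mk [(y, !c)] = (mk [(y, c)])⁻¹ := by simp [inv_mk, invRev]
  refine ⟨hinv, ?_⟩
  rw [hinv, map_inv] at hvertex
  cases c
  · simpa using hvertex
  · simpa [mul_inv_eq_iff_eq_mul] using hvertex

section Magnus

variable [DecidableEq α] [DecidableEq G]

variable (q) in
/-- The Magnus homomorphism of `q` into the wreath product of `ℤ^α` with `G`. Its left component at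
`w` is the flow of the walk `w` from `1`: the signed number of passages through each edge. -/
def magnus : FreeGroup α →* (α → Multiplicative ℤ) ≀ᵣ G :=
  lift fun x => ⟨Pi.mulSingle 1 (Pi.mulSingle x (Multiplicative.ofAdd 1)), q (of x)⟩

theorem right_magnus (w : FreeGroup α) : (magnus q w).right = q w := by
  have h : RegularWreathProduct.rightHom.comp (magnus q) = q := by
    ext x
    simp [magnus]
  exact DFunLike.congr_fun h w

-- Elements of `q.ker` land in the base of the wreath product, which is abelian.
theorem commutator_ker_le_ker_magnus : ⁅q.ker, q.ker⁆ ≤ (magnus q).ker := by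
  rw [Subgroup.commutator_le]
  intro u hu v hv
  rw [MonoidHom.mem_ker, map_commutatorElement, commutatorElement_eq_one_iff_mul_comm]
  have hu' : (magnus q u).right = 1 := (right_magnus u).trans hu
  have hv' : (magnus q v).right = 1 := (right_magnus v).trans hv
  ext : 1 <;> simp [hu', hv', mul_comm]

theorem toAdd_left_magnus_mk_singleton (g h : G) (x : α) (s : α × Bool) :
    ((magnus q (mk [s])).left (g⁻¹ * h) x).toAdd =
      (if signedEdge q g s = ((h, x), true) then 1 else 0) -
        if signedEdge q g s = ((h, x), false) then 1 else 0 := by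
  obtain ⟨y, _ | _⟩ := s
  · have hmagnus : magnus q (mk [(y, false)]) = (magnus q (of y))⁻¹ := map_inv _ (of y)
    have hq : q (mk [(y, false)]) = (q (of y))⁻¹ := map_inv _ (of y)
    have hvertex : q (of y) * (g⁻¹ * h) = 1 ↔ g * (q (of y))⁻¹ = h := by
      rw [mul_eq_one_iff_inv_eq, eq_inv_mul_iff_mul_eq]
    rw [hmagnus]
    by_cases hh : g * (q (of y))⁻¹ = h <;> rcases eq_or_ne y x with rfl | hx <;>
      simp_all [magnus, signedEdge, Ne.symm]
  · change ((magnus q (of y)).left (g⁻¹ * h) x).toAdd = _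
    by_cases hh : g = h <;> rcases eq_or_ne y x with rfl | hx <;>
      simp_all [magnus, signedEdge, inv_mul_eq_one, Ne.symm]

theorem toAdd_left_magnus_mk (g h : G) (x : α) (L : List (α × Bool)) :
    ((magnus q (mk L)).left (g⁻¹ * h) x).toAdd =
      (edgePath q g L).count ((h, x), true) - (edgePath q g L).count ((h, x), false) := by
  induction L generalizing g with
  | nil => simp [edgePath, ← one_eq_mk]
  | cons s L ih =>
    have hs := toAdd_left_magnus_mk_singleton (q := q) g h x s
    have hL := ih (g * q (mk [s]))
    rw [mul_inv_rev, mul_assoc] at hL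
    rw [mk_cons, map_mul, RegularWreathProduct.mul_left, Pi.mul_apply, Pi.mul_apply, toAdd_mul,
      right_magnus, hs, hL, edgePath, List.count_cons, List.count_cons]
    simp only [beq_iff_eq]
    push_cast
    ring

end Magnus

theorem flip_mem_edgePath {L : List (α × Bool)} (hL : mk L ∈ ⁅q.ker, q.ker⁆) (e : G × α)
    (b : Bool) (he : (e, b) ∈ edgePath q 1 L) : (e, !b) ∈ edgePath q 1 L := by
  classical
  have hmagnus : magnus q (mk L) = 1 := commutator_ker_le_ker_magnus hL
  have hflow := toAdd_left_magnus_mk (q := q) 1 e.1 e.2 L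
  simp only [hmagnus, RegularWreathProduct.one_left, Pi.one_apply, toAdd_one] at hflow
  rw [← List.count_pos_iff] at he ⊢
  cases b <;> simp only [Bool.not_false, Bool.not_true] <;> lia

end CayleyGraph

section Girth

variable [DecidableEq α]

theorem exists_interleaved_factorization {G : Type*} [Group G] {q : FreeGroup α →* G}
    {w : FreeGroup α} (hw : w ∈ ⁅q.ker, q.ker⁆) (hw1 : w ≠ 1) :
    ∃ a b X P Q R S : FreeGroup α, a.norm ≤ 1 ∧ b.norm ≤ 1 ∧
      w = X * a * P * b * Q * a⁻¹ * R * b⁻¹ * S ∧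
      X.norm + P.norm + Q.norm + R.norm + S.norm + 4 ≤ w.norm ∧
      P * b * Q ∈ q.ker ∧ Q * a⁻¹ * R ∈ q.ker := by
  have hpath : edgePath q 1 w.toWord ≠ [] := fun h =>
    hw1 (toWord_eq_nil_iff.1 (by rw [← map_edgePath q 1 w.toWord, h, List.map_nil]))
  have hmk : mk w.toWord ∈ ⁅q.ker, q.ker⁆ := by rwa [mk_toWord]
  obtain ⟨_, _, _, _, _, _, _, _, _, hsplit⟩ :=
    exists_interleaved (isReduced_edgePath q 1 isReduced_toWord) hpath (flip_mem_edgePath hmk)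
  obtain ⟨X, a, L₁, hwX, ha, h₁⟩ := exists_eq_append_cons_of_edgePath_eq hsplit
  obtain ⟨P, b, L₂, rfl, hb, h₂⟩ := exists_eq_append_cons_of_edgePath_eq h₁
  obtain ⟨Q, a', L₃, rfl, ha', h₃⟩ := exists_eq_append_cons_of_edgePath_eq h₂
  obtain ⟨R, b', S, rfl, hb', -⟩ := exists_eq_append_cons_of_edgePath_eq h₃
  obtain ⟨haa', hPbQ⟩ := eq_inv_and_eq_mul_of_signedEdge_eq ha ha'
  obtain ⟨hbb', hQaR⟩ := eq_inv_and_eq_mul_of_signedEdge_eq hb hb'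
  refine ⟨mk [a], mk [b], mk X, mk P, mk Q, mk R, mk S, norm_mk_le, norm_mk_le, ?_, ?_, ?_, ?_⟩
  · rw [← mk_toWord (x := w), hwX, ← haa', ← hbb']
    simp [mul_mk]
  · have hlength : w.norm = _ := congrArg List.length hwX
    have hX := norm_mk_le (L₁ := X)
    have hP := norm_mk_le (L₁ := P)
    have hQ := norm_mk_le (L₁ := Q)
    have hR := norm_mk_le (L₁ := R)
    have hS := norm_mk_le (L₁ := S)
    simp only [List.length_append, List.length_cons] at hlength
    lia
  · simpa [MonoidHom.mem_ker, mul_assoc, -mul_mk] using hPbQ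
  · rw [MonoidHom.mem_ker, ← haa']
    simpa [mul_assoc, -mul_mk] using hQaR

theorem interleaved_eq_conj_commutator_mul {G : Type*} [Group G] (a b X P Q R S : G) :
    X * a * P * b * Q * a⁻¹ * R * b⁻¹ * S =
      X * R * ⁅(Q * a⁻¹ * R)⁻¹, Q * P * b⁆ * (X * R)⁻¹ * (X * R * Q * P * S) := by
  rw [commutatorElement_def]; group

variable {Λ : Subgroup (FreeGroup α)} {g : ℕ}

theorem three_mul_le_of_not_commute [Λ.Normal] (hg : ∀ u ∈ Λ, u ≠ 1 → g ≤ u.norm)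
    {a b P Q R : FreeGroup α} (ha : a.norm ≤ 1) (hb : b.norm ≤ 1)
    (hy : Q * a⁻¹ * R ∈ Λ) (hz : Q * P * b ∈ Λ) (hyz : ¬ Commute (Q * a⁻¹ * R) (Q * P * b)) :
    3 * g ≤ P.norm + Q.norm + R.norm + (R * Q * P).norm + 4 := by
  set y := Q * a⁻¹ * R with hy_def
  set z := Q * P * b with hz_def
  have hΛ : Λ.Normal := inferInstance
  have hy1 : y ≠ 1 := fun h => hyz (h ▸ Commute.one_left z)
  have hz1 : z ≠ 1 := fun h => hyz (h ▸ Commute.one_right y)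
  have hyz1 : y⁻¹ * z ≠ 1 := fun h => hyz (inv_mul_eq_one.1 h ▸ Commute.refl y)
  have hzy1 : z * y ≠ 1 := fun h => hyz (eq_inv_of_mul_eq_one_left h ▸ (Commute.refl y).inv_right)
  have hRQ : g ≤ (R * Q).norm + 1 :=
    calc g ≤ (R * y * R⁻¹).norm := hg _ (hΛ.conj_mem y hy R) (by simpa using hy1)
      _ = (R * Q * a⁻¹).norm := by congr 1; rw [hy_def]; group
      _ ≤ (R * Q).norm + 1 := by grw [FreeGroup.norm_mul_le, norm_inv_eq, ha]
  have hQP : g ≤ (Q * P).norm + 1 :=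
    calc g ≤ z.norm := hg z hz hz1
      _ ≤ (Q * P).norm + 1 := by grw [FreeGroup.norm_mul_le, hb]
  have hRP : g ≤ R.norm + 1 + P.norm + 1 :=
    calc g ≤ (y⁻¹ * z).norm := hg _ (Λ.mul_mem (Λ.inv_mem hy) hz) hyz1
      _ = (R⁻¹ * a * P * b).norm := by congr 1; rw [hy_def, hz_def]; group
      _ ≤ R.norm + 1 + P.norm + 1 := by
        grw [FreeGroup.norm_mul_le _ b, FreeGroup.norm_mul_le _ P, FreeGroup.norm_mul_le _ a,
          norm_inv_eq, ha, hb]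
  have hRQP : g ≤ (R * Q * P).norm + 1 + Q.norm + 1 :=
    calc g ≤ (R * (z * y) * R⁻¹).norm :=
          hg _ (hΛ.conj_mem _ (Λ.mul_mem hz hy) R) (by simpa using hzy1)
      _ = (R * Q * P * b * Q * a⁻¹).norm := by congr 1; rw [hy_def, hz_def]; group
      _ ≤ (R * Q * P).norm + 1 + Q.norm + 1 := by
        grw [FreeGroup.norm_mul_le _ a⁻¹, FreeGroup.norm_mul_le _ Q, FreeGroup.norm_mul_le _ b,
          norm_inv_eq, ha, hb]
  have four_point := norm_mul_add_norm_mul_le_max R Q P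
  lia

theorem three_mul_le_norm_of_mem_commutator [Λ.Normal] (hg : ∀ u ∈ Λ, u ≠ 1 → g ≤ u.norm)
    {w : FreeGroup α} (hw : w ∈ ⁅Λ, Λ⁆) (hw1 : w ≠ 1) : 3 * g ≤ w.norm := by
  induction hn : w.norm using Nat.strong_induction_on generalizing w with
  | _ n ih =>
  subst hn
  have hker : (QuotientGroup.mk' Λ).ker = Λ := QuotientGroup.ker_mk' Λ
  obtain ⟨a, b, X, P, Q, R, S, ha, hb, hfactor, hnorm, hPbQ, hy⟩ :=
    exists_interleaved_factorization (q := QuotientGroup.mk' Λ) (by rwa [hker]) hw1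
  rw [hker] at hPbQ hy
  have hz : Q * P * b ∈ Λ := by
    simpa [mul_assoc] using (inferInstance : Λ.Normal).conj_mem _ hPbQ Q
  rw [interleaved_eq_conj_commutator_mul] at hfactor
  set c := X * R * ⁅(Q * a⁻¹ * R)⁻¹, Q * P * b⁆ * (X * R)⁻¹ with hc_def
  have hc : c ∈ ⁅Λ, Λ⁆ := (inferInstance : ⁅Λ, Λ⁆.Normal).conj_mem _
    (Subgroup.commutator_mem_commutator (Λ.inv_mem hy) hz) _
  by_cases hrest : X * R * Q * P * S = 1
  · have hnot_commute : ¬ Commute (Q * a⁻¹ * R) (Q * P * b) := fun h => hw1 <| by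
      rw [hfactor, hrest, hc_def, commutatorElement_eq_one_iff_commute.2 h.inv_left]; group
    have hRQP : (R * Q * P).norm ≤ S.norm + X.norm :=
      calc (R * Q * P).norm = ((S * X)⁻¹).norm := by
            rw [show R * Q * P = X⁻¹ * (X * R * Q * P * S) * S⁻¹ by group, hrest]; group
        _ ≤ S.norm + X.norm := by grw [norm_inv_eq, FreeGroup.norm_mul_le]
    have hgenus_one := three_mul_le_of_not_commute hg ha hb hy hz hnot_commute
    lia
  · have hmem : X * R * Q * P * S ∈ ⁅Λ, Λ⁆ := (Subgroup.mul_mem_cancel_left _ hc).1 (hfactor ▸ hw)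
    have hle : (X * R * Q * P * S).norm ≤ X.norm + R.norm + Q.norm + P.norm + S.norm := by
      iterate 4 grw [FreeGroup.norm_mul_le]
    have hshorter := ih _ (by lia) hmem hrest rfl
    lia

/-- The girth of a subgroup of a free group on any alphabet, `⊤` for the trivial subgroup; for the
alphabet `Fin 2` it is `subgroupGirth`. -/
noncomputable def girth (Λ : Subgroup (FreeGroup α)) : ℕ∞ :=
  ⨅ w : {w : FreeGroup α // w ∈ Λ ∧ w ≠ 1}, (w.1.norm : ℕ∞)

end Girth

end GirthCommutator

open GirthCommutator in
theorem girth_commutator_ge_three_mul_general {α : Type*} [DecidableEq α]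
    (Λ : Subgroup (FreeGroup α)) [Λ.Normal] : 3 * girth Λ ≤ girth ⁅Λ, Λ⁆ := by
  refine le_iInf fun ⟨w, hw, hw1⟩ => ?_
  have girth_le (u : FreeGroup α) (hu : u ∈ Λ) (hu1 : u ≠ 1) : girth Λ ≤ u.norm :=
    iInf_le_of_le ⟨u, hu, hu1⟩ le_rfl
  have hfinite : girth Λ ≠ ⊤ :=
    ne_top_of_le_ne_top (ENat.natCast_ne_top _)
      (girth_le w (Subgroup.commutator_le_left Λ Λ hw) hw1)
  lift girth Λ to ℕ using hfinite with g
  exact_mod_cast three_mul_le_norm_of_mem_commutator (fun u hu hu1 => by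
    exact_mod_cast girth_le u hu hu1) hw hw1

theorem girth_commutator_ge_three_mul (Λ : Subgroup (FreeGroup (Fin 2))) (hΛ : Λ.Normal) :
    3 * subgroupGirth Λ ≤ subgroupGirth ⁅Λ, Λ⁆ :=
  girth_commutator_ge_three_mul_general Λ
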